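/- Let q ≥ 2 be an integer. For all sufficiently large t, the q-colour on-line Ramsey number of the complete bipartite graph K_{t,t} satisfies r̃_q(K_{t,t}) ≤ 48 · q^{t+2} · t^{3 - 1/q} · (log t)^{1/q}, where log denotes the logarithm to the base q. -/

import Mathlib

/-- A monochromatic clique of size `k` in colour `i` for an edge-colouring `c` of `K_n`. -/
def monoClique {n q : ℕ} (c : Sym2 (Fin n) → Fin q) (i : Fin q) (k : ℕ) : Prop :=
  ∃ A : Finset (Fin n), A.card = k ∧ ∀ u ∈ A, ∀ v ∈ A, u ≠ v → c s(u, v) = i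

/-- The `q`-colour Ramsey number `r(k 0, …, k (q-1))`. -/
noncomputable def ramseyQ {q : ℕ} (k : Fin q → ℕ) : ℕ :=
  sInf {n : ℕ | ∀ c : Sym2 (Fin n) → Fin q, ∃ i : Fin q, monoClique c i (k i)}

/-- The two-colour Ramsey number `r(s, t)`. -/
noncomputable def ramsey2 (s t : ℕ) : ℕ := ramseyQ ![s, t]

/-- A history in the on-line Ramsey game: the previously presented edges with their colours. -/
abbrev History (q : ℕ) := List (Sym2 ℕ × Fin q)

/-- A Builder strategy is valid if it always presents a genuine new edge. -/
def validBuilder {q : ℕ} (B : History q → Sym2 ℕ) : Prop :=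
  ∀ h : History q, ¬ (B h).IsDiag ∧ B h ∉ h.map Prod.fst

/-- The play determined by a Builder strategy `B` and a Painter strategy `P`:
`play B P n` is the history after `n` rounds. -/
def play {q : ℕ} (B : History q → Sym2 ℕ) (P : History q → Sym2 ℕ → Fin q) : ℕ → History q
  | 0 => []
  | n + 1 =>
      let h := play B P n
      h ++ [(B h, P h (B h))]

/-- The graph formed by the edges of colour `i` in a history. -/
def colourGraph {q : ℕ} (h : History q) (i : Fin q) : SimpleGraph ℕ :=
  SimpleGraph.fromEdgeSet {e | (e, i) ∈ h}

/-- `H` contains a copy of `G` as a subgraph. -/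
def containsCopy {V : Type*} (G : SimpleGraph V) (H : SimpleGraph ℕ) : Prop :=
  ∃ f : V → ℕ, Function.Injective f ∧ ∀ u v, G.Adj u v → H.Adj (f u) (f v)

/-- The `q`-colour on-line Ramsey number of `G`: the least `N` such that Builder has a
valid strategy forcing, against every Painter strategy, a monochromatic copy of `G`
within at most `N` rounds. -/
noncomputable def onlineRamsey {V : Type*} (q : ℕ) (G : SimpleGraph V) : ℕ :=
  sInf {N : ℕ | ∃ B : History q → Sym2 ℕ, validBuilder B ∧
    ∀ P : History q → Sym2 ℕ → Fin q,
      ∃ n ≤ N, ∃ i : Fin q, containsCopy G (colourGraph (play B P n) i)}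


/-! ### Game combinatorics -/

/-- Some colour class of the history contains `K_{t,t}`. -/
def WonKtt {q : ℕ} (t : ℕ) (h : History q) : Prop :=
  ∃ i : Fin q, containsCopy (completeBipartiteGraph (Fin t) (Fin t)) (colourGraph h i)

/-- Builder can force a win in exactly `n` more rounds. -/
def CanWin {q : ℕ} (t : ℕ) : ℕ → History q → Prop
  | 0, h => WonKtt t h
  | n + 1, h => ∃ e : Sym2 ℕ, (¬ e.IsDiag ∧ e ∉ h.map Prod.fst) ∧
      ∀ c : Fin q, CanWin t n (h ++ [(e, c)])

theorem exists_fresh {q : ℕ} (h : History q) :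
    ∃ e : Sym2 ℕ, ¬ e.IsDiag ∧ e ∉ h.map Prod.fst := by
  classical
  have hinj : Function.Injective (fun n : ℕ => s(0, n + 1)) := by
    intro a b hab
    simpa using hab
  obtain ⟨e, he, hne⟩ := (Set.infinite_range_of_injective hinj).exists_notMem_finset
    (h.map Prod.fst).toFinset
  obtain ⟨n, rfl⟩ := he
  refine ⟨_, ?_, fun hm => hne (List.mem_toFinset.2 hm)⟩
  simp

theorem play_length {q : ℕ} (B : History q → Sym2 ℕ) (P : History q → Sym2 ℕ → Fin q) (n : ℕ) :
    (play B P n).length = n := by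
  induction n with
  | zero => rfl
  | succ n ih => simp [play, ih]

theorem onlineRamsey_le_of_canWin {q : ℕ} (t N : ℕ) (hW : CanWin (q := q) t N []) :
    onlineRamsey q (completeBipartiteGraph (Fin t) (Fin t)) ≤ N := by
  classical
  apply Nat.sInf_le
  have key : ∀ h : History q, ∃ e : Sym2 ℕ, (¬ e.IsDiag ∧ e ∉ h.map Prod.fst) ∧
      (∀ n, N - h.length = n + 1 → CanWin t (n + 1) h →
        ∀ c : Fin q, CanWin t n (h ++ [(e, c)])) := by
    intro h
    by_cases hh : ∃ n, N - h.length = n + 1 ∧ CanWin t (n + 1) h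
    · obtain ⟨n, hn, e, he, hc⟩ := hh
      refine ⟨e, he, fun n' hn' _ => ?_⟩
      have : n' = n := by omega
      subst this
      exact hc
    · obtain ⟨e, he⟩ := exists_fresh h
      exact ⟨e, he, fun n hn hw => absurd ⟨n, hn, hw⟩ hh⟩
  choose B hB1 hB2 using key
  refine ⟨B, hB1, fun P => ⟨N, le_rfl, ?_⟩⟩
  have inv : ∀ k, k ≤ N → CanWin t (N - k) (play B P k) := by
    intro k
    induction k with
    | zero => intro _; simpa [play] using hW
    | succ k ih =>
      intro hk
      have h1 := ih (by omega)
      have e1 : N - k = (N - (k + 1)) + 1 := by omega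
      rw [e1] at h1
      exact hB2 (play B P k) (N - (k + 1)) (by rw [play_length]; exact e1) h1 _
  have := inv N le_rfl
  rw [Nat.sub_self] at this
  exact this

theorem canWin_list {q : ℕ} (hq : 0 < q) (t N : ℕ) (L : List (Sym2 ℕ)) :
    ∀ h : History q, L.Nodup → (∀ e ∈ L, ¬ e.IsDiag) → (∀ e ∈ L, e ∉ h.map Prod.fst) →
    (∀ c : Sym2 ℕ → Fin q, CanWin t N (h ++ L.map (fun e => (e, c e)))) →
    CanWin t (N + L.length) h := by
  classical
  induction L with
  | nil =>
    intro h _ _ _ hc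
    simpa using hc (fun _ => ⟨0, hq⟩)
  | cons e L ih =>
    intro h hnd hd hf hc
    rw [List.nodup_cons] at hnd
    refine ⟨e, ⟨hd e (by simp), hf e (by simp)⟩, fun c0 => ?_⟩
    apply ih _ hnd.2 (fun e' he' => hd e' (by simp [he']))
    · intro e' he' hm
      rw [List.map_append, List.mem_append] at hm
      rcases hm with hm | hm
      · exact hf e' (by simp [he']) hm
      · simp at hm
        subst hm
        exact hnd.1 he'
    · intro c
      have := hc (Function.update c e c0)
      have e2 : L.map (fun e' => (e', Function.update c e c0 e')) = L.map (fun e' => (e', c e')) := by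
        apply List.map_congr_left
        intro e' he'
        have : e' ≠ e := fun hh => hnd.1 (hh ▸ he')
        simp [Function.update_of_ne this]
      simpa [e2] using this

theorem wonKtt_of {q t : ℕ} (h : History q) (i : Fin q) (S T : Finset ℕ) (hS : S.card = t)
    (hT : T.card = t) (hdis : Disjoint S T) (hc : ∀ x ∈ S, ∀ y ∈ T, (s(x, y), i) ∈ h) :
    WonKtt t h := by
  refine ⟨i, Sum.elim (fun a => S.orderEmbOfFin hS a) (fun a => T.orderEmbOfFin hT a), ?_, ?_⟩
  · apply Function.Injective.sumElim
    · exact (S.orderEmbOfFin hS).injective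
    · exact (T.orderEmbOfFin hT).injective
    · intro a b
      exact Finset.disjoint_left.1 hdis (S.orderEmbOfFin_mem hS a) |>
        fun hh heq => hh (heq ▸ T.orderEmbOfFin_mem hT b)
  · have aux : ∀ a b : Fin t, (colourGraph h i).Adj (S.orderEmbOfFin hS a) (T.orderEmbOfFin hT b) := by
      intro a b
      rw [colourGraph, SimpleGraph.fromEdgeSet_adj]
      refine ⟨hc _ (S.orderEmbOfFin_mem hS a) _ (T.orderEmbOfFin_mem hT b), fun heq => ?_⟩
      exact Finset.disjoint_left.1 hdis (S.orderEmbOfFin_mem hS a)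
        (heq ▸ T.orderEmbOfFin_mem hT b)
    rintro (a | a) (b | b) hab
    · simp at hab
    · exact aux a b
    · exact (aux b a).symm
    · simp at hab

/-- Kővári–Sós–Turán type counting with colour-dependent thresholds. -/
theorem kst {q : ℕ} (A B : Finset ℕ) (c : ℕ → ℕ → Fin q) (τ : ℕ) (hτ : τ ≤ A.card)
    (d τ' : Fin q → ℕ) (hd : ∑ i, d i ≤ A.card) (hB : 0 < B.card)
    (hn : ∀ i, τ' i * A.card.choose τ * q ≤ B.card * (d i).choose τ) :
    ∃ i : Fin q, ∃ T ⊆ A, T.card = τ ∧ ∃ S ⊆ B, S.card = τ' i ∧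
      ∀ x ∈ T, ∀ y ∈ S, c x y = i := by
  classical
  have hqpos : 0 < q := by
    obtain ⟨b, hb⟩ := Finset.card_pos.1 hB
    exact (Nat.zero_le _).trans_lt (c b b).2
  have : Nonempty (Fin q) := ⟨⟨0, hqpos⟩⟩
  -- every b has a colour of large degree
  have h1 : ∀ b, ∃ i : Fin q, d i ≤ (A.filter (fun a => c a b = i)).card := by
    intro b
    by_contra! hcon
    have hs : ∑ i : Fin q, (A.filter (fun a => c a b = i)).card = A.card :=
      (Finset.card_eq_sum_card_fiberwise (f := fun a => c a b) (s := A) (t := Finset.univ)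
        (by intro a _; simp)).symm
    have := Finset.sum_lt_sum_of_nonempty (s := (Finset.univ : Finset (Fin q)))
      Finset.univ_nonempty (fun i _ => hcon i)
    omega
  choose g hg using h1
  -- popular colour
  obtain ⟨i, -, hi⟩ : ∃ i ∈ (Finset.univ : Finset (Fin q)),
      B.card ≤ (B.filter (fun b => g b = i)).card * q := by
    by_contra! hcon
    have hs : ∑ i : Fin q, (B.filter (fun b => g b = i)).card = B.card :=
      (Finset.card_eq_sum_card_fiberwise (f := g) (s := B) (t := Finset.univ)
        (by intro a _; simp)).symm
    have := Finset.sum_lt_sum_of_nonempty (s := (Finset.univ : Finset (Fin q)))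
      Finset.univ_nonempty (fun i hi => hcon i hi)
    rw [← Finset.sum_mul, hs] at this
    simp at this
    rw [mul_comm] at this
    exact lt_irrefl _ this
  set Bi := B.filter (fun b => g b = i) with hBi
  have hcount : τ' i * A.card.choose τ ≤ Bi.card * (d i).choose τ := by
    have h2 := hn i
    have h3 : B.card * (d i).choose τ ≤ Bi.card * q * (d i).choose τ := Nat.mul_le_mul_right _ hi
    have h4 : τ' i * A.card.choose τ * q ≤ Bi.card * (d i).choose τ * q := by
      calc _ ≤ _ := h2
        _ ≤ _ := h3
        _ = _ := by ring
    exact Nat.le_of_mul_le_mul_right h4 hqpos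
  have hdc : Bi.card * (d i).choose τ ≤
      ∑ T ∈ A.powersetCard τ, (Bi.filter (fun b => ∀ x ∈ T, c x b = i)).card := by
    calc Bi.card * (d i).choose τ = ∑ b ∈ Bi, (d i).choose τ := by simp
      _ ≤ ∑ b ∈ Bi, ((A.powersetCard τ).filter (fun T => ∀ x ∈ T, c x b = i)).card := by
        apply Finset.sum_le_sum
        intro b hb
        have hgb : g b = i := (Finset.mem_filter.1 hb).2
        have : ((A.filter (fun a => c a b = i)).powersetCard τ) ⊆
            ((A.powersetCard τ).filter (fun T => ∀ x ∈ T, c x b = i)) := by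
          intro T hT
          rw [Finset.mem_powersetCard] at hT
          rw [Finset.mem_filter, Finset.mem_powersetCard]
          exact ⟨⟨hT.1.trans (Finset.filter_subset _ _), hT.2⟩,
            fun x hx => (Finset.mem_filter.1 (hT.1 hx)).2⟩
        calc (d i).choose τ ≤ (A.filter (fun a => c a b = i)).card.choose τ :=
              Nat.choose_le_choose _ (hgb ▸ hg b)
          _ = _ := (Finset.card_powersetCard _ _).symm
          _ ≤ _ := Finset.card_le_card this
      _ = _ := by
        simp only [Finset.card_filter]
        exact Finset.sum_comm
  have hne : (A.powersetCard τ).Nonempty := Finset.powersetCard_nonempty.2 hτ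
  obtain ⟨T, hT, hTc⟩ := Finset.exists_le_of_sum_le hne (f := fun _ => τ' i)
    (g := fun T => (Bi.filter (fun b => ∀ x ∈ T, c x b = i)).card) (by
      simp only [Finset.sum_const, Finset.card_powersetCard, smul_eq_mul]
      calc _ = τ' i * A.card.choose τ := by ring
        _ ≤ _ := hcount
        _ ≤ _ := hdc)
  rw [Finset.mem_powersetCard] at hT
  obtain ⟨S, hS, hSc⟩ := Finset.exists_subset_card_eq hTc
  refine ⟨i, T, hT.1, hT.2, S, ?_, hSc, ?_⟩
  · exact hS.trans ((Finset.filter_subset _ _).trans (Finset.filter_subset _ _))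
  · intro x hx y hy
    exact (Finset.mem_filter.1 (hS hy)).2 x hx

/-- The list of edges between two sets. -/
noncomputable def edgeList (X Y : Finset ℕ) : List (Sym2 ℕ) :=
  ((X ×ˢ Y).image (fun p => s(p.1, p.2))).toList

theorem mem_edgeList {X Y : Finset ℕ} {e : Sym2 ℕ} :
    e ∈ edgeList X Y ↔ ∃ x ∈ X, ∃ y ∈ Y, s(x, y) = e := by
  simp [edgeList, and_assoc]

theorem edgeList_nodup (X Y : Finset ℕ) : (edgeList X Y).Nodup := Finset.nodup_toList _

theorem edgeList_length {X Y : Finset ℕ} (h : Disjoint X Y) :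
    (edgeList X Y).length = X.card * Y.card := by
  rw [edgeList, Finset.length_toList, Finset.card_image_of_injOn, Finset.card_product]
  rintro ⟨a, b⟩ hab ⟨a', b'⟩ hab' heq
  simp only [Finset.coe_product, Set.mem_prod, Finset.mem_coe] at hab hab'
  simp only [Sym2.eq_iff] at heq
  rcases heq with ⟨rfl, rfl⟩ | ⟨rfl, rfl⟩
  · rfl
  · exact absurd hab.1 (fun hh => Finset.disjoint_left.1 h hh hab'.2)

theorem edgeList_not_diag {X Y : Finset ℕ} (h : Disjoint X Y) :
    ∀ e ∈ edgeList X Y, ¬ e.IsDiag := by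
  intro e he
  obtain ⟨x, hx, y, hy, rfl⟩ := mem_edgeList.1 he
  rw [Sym2.mk_isDiag_iff]
  rintro rfl
  exact Finset.disjoint_left.1 h hx hy

theorem game_bound {q : ℕ} (hq : 0 < q) (t s k δ n₁ n₂ : ℕ) (hst : s ≤ t) (htk : t ≤ q * k)
    (hδ : (q - 1) * δ ≤ k) (hn₁ : 0 < n₁) (hn₂ : 0 < n₂)
    (h1 : (q * k) * (q * k).choose (t - s) * q ≤ n₁ * k.choose (t - s))
    (h2 : t * (q * k).choose t * q ≤ n₂ * (k + δ).choose t)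
    (h3 : s * (q * k).choose t * q ≤ n₂ * (k - (q - 1) * δ).choose t) :
    onlineRamsey q (completeBipartiteGraph (Fin t) (Fin t)) ≤ q * k * n₂ + q * k * n₁ := by
  classical
  apply onlineRamsey_le_of_canWin
  set X : Finset ℕ := Finset.range (q * k) with hX
  set Y : Finset ℕ := Finset.Ico (q * k) (q * k + n₁) with hY
  set Z : Finset ℕ := Finset.Ico (q * k + n₁) (q * k + n₁ + n₂) with hZ
  have hXc : X.card = q * k := by simp [hX]
  have hYc : Y.card = n₁ := by simp [hY]
  have hZc : Z.card = n₂ := by simp [hZ]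
  have hXY : Disjoint X Y := by
    rw [Finset.disjoint_left]; intro a; simp [hX, hY]; omega
  have hXZ : Disjoint X Z := by
    rw [Finset.disjoint_left]; intro a; simp [hX, hZ]; omega
  have hYZ : Disjoint Y Z := by
    rw [Finset.disjoint_left]; intro a; simp [hY, hZ]; omega
  have hl1 : (edgeList X Y).length = q * k * n₁ := by rw [edgeList_length hXY, hXc, hYc]
  rw [← hl1]
  apply canWin_list hq t _ (edgeList X Y) [] (edgeList_nodup _ _) (edgeList_not_diag hXY) (by simp)
  intro c₁
  obtain ⟨i, T, hTX, hTc, S, hSY, hSc, hTS⟩ := kst X Y (fun x y => c₁ s(x, y)) (t - s)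
    (by rw [hXc]; omega) (fun _ => k) (fun _ => q * k) (by simp [hXc]) (by rw [hYc]; exact hn₁)
    (by intro i; rw [hXc, hYc]; exact h1)
  have hSZ : Disjoint S Z := Finset.disjoint_of_subset_left hSY hYZ
  have hl2 : 0 + (edgeList S Z).length = q * k * n₂ := by
    rw [edgeList_length hSZ, hSc, hZc, zero_add]
  rw [← hl2]
  apply canWin_list hq t 0 (edgeList S Z) _ (edgeList_nodup _ _) (edgeList_not_diag hSZ)
  · intro e he hm
    obtain ⟨x, hx, y, hy, rfl⟩ := mem_edgeList.1 he
    simp only [List.nil_append, List.map_map, List.mem_map, Function.comp] at hm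
    obtain ⟨e', he', heq⟩ := hm
    obtain ⟨x', hx', y', hy', rfl⟩ := mem_edgeList.1 he'
    simp only [Sym2.eq_iff] at heq
    rcases heq with ⟨rfl, rfl⟩ | ⟨rfl, rfl⟩
    · exact Finset.disjoint_left.1 hYZ hy' hy
    · exact Finset.disjoint_left.1 hXZ hx' hy
  intro c₂
  have hsum : ∑ j : Fin q, (if j = i then k - (q - 1) * δ else k + δ) ≤ S.card := by
    rw [hSc, Finset.sum_ite]
    simp only [Finset.sum_const, smul_eq_mul, Finset.filter_eq', Finset.mem_univ, if_true,
      Finset.card_singleton, Finset.filter_ne', Finset.card_erase_of_mem, Finset.card_univ,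
      Fintype.card_fin, one_mul]
    obtain ⟨r, rfl⟩ : ∃ r, q = r + 1 := ⟨q - 1, by omega⟩
    simp only [Nat.add_sub_cancel] at hδ ⊢
    rw [mul_add, add_mul, one_mul]
    omega
  obtain ⟨j, T₂, hT₂S, hT₂c, R, hRZ, hRc, hTR⟩ := kst S Z (fun x y => c₂ s(x, y)) t
    (by rw [hSc]; exact htk) (fun j => if j = i then k - (q - 1) * δ else k + δ)
    (fun j => if j = i then s else t) hsum (by rw [hZc]; exact hn₂)
    (by
      intro j
      rw [hSc, hZc]
      by_cases hj : j = i
      · simp only [hj, if_true]; exact h3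
      · simp only [hj, if_false]; exact h2)
  have hRT₂ : Disjoint R T₂ := (Finset.disjoint_of_subset_left hRZ
    (Finset.disjoint_of_subset_right hT₂S hSZ.symm))
  have mem2 : ∀ x ∈ R, ∀ y ∈ T₂, (s(x, y), j) ∈ (edgeList S Z).map (fun e => (e, c₂ e)) := by
    intro x hx y hy
    refine List.mem_map.2 ⟨s(y, x), mem_edgeList.2 ⟨y, hT₂S hy, x, hRZ hx, rfl⟩, ?_⟩
    have : c₂ s(y, x) = j := hTR y hy x hx
    show (s(y, x), c₂ s(y, x)) = (s(x, y), j)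
    rw [this, Sym2.eq_swap]
  by_cases hj : j = i
  · subst hj
    simp only [if_true] at hRc
    have hTR' : Disjoint T R := Finset.disjoint_of_subset_left hTX
      (Finset.disjoint_of_subset_right hRZ hXZ)
    apply wonKtt_of _ j (T ∪ R) T₂ _ hT₂c
    · rw [Finset.disjoint_union_left]
      exact ⟨Finset.disjoint_of_subset_left hTX
        (Finset.disjoint_of_subset_right (hT₂S.trans hSY) hXY), hRT₂⟩
    · intro x hx y hy
      rw [List.mem_append]
      rcases Finset.mem_union.1 hx with hx | hx
      · left
        rw [List.nil_append]
        refine List.mem_map.2 ⟨s(x, y), mem_edgeList.2 ⟨x, hTX hx, y, hSY (hT₂S hy), rfl⟩, ?_⟩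
        have : c₁ s(x, y) = j := hTS x hx y (hT₂S hy)
        simp [this]
      · right
        exact mem2 x hx y hy
    · rw [Finset.card_union_of_disjoint hTR', hTc, hRc]
      omega
  · simp only [hj, if_false] at hRc
    apply wonKtt_of _ j R T₂ hRc hT₂c hRT₂
    intro x hx y hy
    rw [List.mem_append]
    exact Or.inr (mem2 x hx y hy)

/-! ### Numerical estimates -/

theorem choose_bridge (a m q n d τ : ℕ) (h : a * m ^ τ * q ≤ n * (d + 1 - τ) ^ τ) :
    a * m.choose τ * q ≤ n * d.choose τ := by
  have h1 : τ.factorial * m.choose τ ≤ m ^ τ := by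
    rw [← Nat.descFactorial_eq_factorial_mul_choose]
    exact Nat.descFactorial_le_pow m τ
  have h2 : (d + 1 - τ) ^ τ ≤ τ.factorial * d.choose τ := by
    rw [← Nat.descFactorial_eq_factorial_mul_choose]
    exact Nat.pow_sub_le_descFactorial d τ
  apply Nat.le_of_mul_le_mul_left _ (Nat.factorial_pos τ)
  calc τ.factorial * (a * m.choose τ * q) = a * (τ.factorial * m.choose τ) * q := by ring
    _ ≤ a * m ^ τ * q := by gcongr
    _ ≤ n * (d + 1 - τ) ^ τ := h
    _ ≤ n * (τ.factorial * d.choose τ) := by gcongr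
    _ = _ := by ring

theorem pow_le_exp_mul (k D E : ℝ) (τ : ℕ) (hk : 0 < k) (hD : 0 < D)
    (hE : τ * (k - D) ≤ E * D) : k ^ τ ≤ Real.exp E * D ^ τ := by
  have h1 : k / D ≤ Real.exp ((k - D) / D) := by
    have := Real.add_one_le_exp ((k - D) / D)
    have e : (k - D) / D + 1 = k / D := by field_simp; ring
    linarith
  have h2 : (k / D) ^ τ ≤ Real.exp E := by
    calc (k / D) ^ τ ≤ (Real.exp ((k - D) / D)) ^ τ := by gcongr
      _ = Real.exp (τ * ((k - D) / D)) := (Real.exp_nat_mul _ _).symm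
      _ ≤ Real.exp E := by
        apply Real.exp_le_exp.2
        rw [← mul_div_assoc, div_le_iff₀ hD]
        exact hE
  rw [div_pow, div_le_iff₀ (by positivity)] at h2
  exact h2

theorem exp_three_le : Real.exp 3 ≤ 20.2 := by
  have h : Real.exp 3 = (Real.exp 1) ^ 3 := by
    rw [← Real.exp_nat_mul]; norm_num
  rw [h]
  have h1 := Real.exp_one_lt_d9
  calc (Real.exp 1) ^ 3 ≤ (2.7182818286 : ℝ) ^ 3 := by
        gcongr
    _ ≤ 20.2 := by norm_num

theorem nat_sub_cast_ge (a b : ℕ) : (a : ℝ) - b ≤ ((a - b : ℕ) : ℝ) := by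
  have : a ≤ (a - b) + b := by omega
  have : (a : ℝ) ≤ ((a - b : ℕ) : ℝ) + b := by exact_mod_cast this
  linarith

/-- First stage. -/
theorem stage_one (q t τ : ℕ) (ht : 2 ≤ t) (hτ : τ ≤ t) :
    (q * t ^ 2) * (q * t ^ 2).choose τ * q ≤
      (21 * q * (q * t ^ 2) * q ^ τ) * (t ^ 2).choose τ := by
  apply choose_bridge
  have htR : (2 : ℝ) ≤ t := by exact_mod_cast ht
  have hτR : (τ : ℝ) ≤ t := by exact_mod_cast hτ
  have hτ0 : (0 : ℝ) ≤ τ := by positivity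
  have hD : ((t ^ 2 + 1 - τ : ℕ) : ℝ) ≥ (t : ℝ) ^ 2 + 1 - t := by
    have := nat_sub_cast_ge (t ^ 2 + 1) τ
    push_cast at this
    linarith
  have hD0 : (0 : ℝ) < ((t ^ 2 + 1 - τ : ℕ) : ℝ) := by nlinarith
  have hp := pow_le_exp_mul ((t : ℝ) ^ 2) ((t ^ 2 + 1 - τ : ℕ) : ℝ) 3 τ (by positivity) hD0 (by
    have h1 : (τ : ℝ) * ((t : ℝ) ^ 2 - ((t ^ 2 + 1 - τ : ℕ) : ℝ)) ≤ τ * (t - 1) := by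
      exact mul_le_mul_of_nonneg_left (by linarith) hτ0
    have h2 : (τ : ℝ) * (t - 1) ≤ t * (t - 1) := by
      exact mul_le_mul_of_nonneg_right hτR (by linarith)
    nlinarith)
  have he := exp_three_le
  have hp2 : ((t : ℝ) ^ 2) ^ τ ≤ 21 * ((t ^ 2 + 1 - τ : ℕ) : ℝ) ^ τ := by
    refine hp.trans ?_
    gcongr
    linarith
  have hp3 : (t ^ 2) ^ τ ≤ 21 * (t ^ 2 + 1 - τ) ^ τ := by exact_mod_cast hp2
  calc q * t ^ 2 * (q * t ^ 2) ^ τ * q = q * (q * t ^ 2) * q ^ τ * (t ^ 2) ^ τ := by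
        rw [mul_pow q (t ^ 2)]; ring
    _ ≤ q * (q * t ^ 2) * q ^ τ * (21 * (t ^ 2 + 1 - τ) ^ τ) := by gcongr
    _ = _ := by ring

/-- Second stage: passing from real estimates to binomials. -/
theorem stage_two_aux (q t a d n : ℕ) (E : ℝ) (ht : 0 < t)
    (hD0 : (0 : ℝ) < (d : ℝ) + 1 - t)
    (hE : t * ((t : ℝ) ^ 2 - ((d : ℝ) + 1 - t)) ≤ E * ((d : ℝ) + 1 - t))
    (hn : (a : ℝ) * (q : ℝ) ^ (t + 1) * Real.exp E ≤ n) :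
    a * (q * t ^ 2).choose t * q ≤ n * d.choose t := by
  apply choose_bridge
  have htd : t ≤ d + 1 := by
    have : (t : ℝ) ≤ (d : ℝ) + 1 := by linarith
    exact_mod_cast this
  have hc : ((d + 1 - t : ℕ) : ℝ) = (d : ℝ) + 1 - t := by
    rw [Nat.cast_sub htd]; push_cast; ring
  have hp := pow_le_exp_mul ((t : ℝ) ^ 2) ((d : ℝ) + 1 - t) E t (by positivity) hD0 hE
  have : ((a * (q * t ^ 2) ^ t * q : ℕ) : ℝ) ≤ ((n * (d + 1 - t) ^ t : ℕ) : ℝ) := by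
    push_cast
    rw [hc]
    calc (a : ℝ) * (q * (t : ℝ) ^ 2) ^ t * q = a * (q : ℝ) ^ (t + 1) * ((t : ℝ) ^ 2) ^ t := by
          rw [mul_pow (q : ℝ)]; ring
      _ ≤ a * (q : ℝ) ^ (t + 1) * (Real.exp E * ((d : ℝ) + 1 - t) ^ t) := by gcongr
      _ = (a * (q : ℝ) ^ (t + 1) * Real.exp E) * ((d : ℝ) + 1 - t) ^ t := by ring
      _ ≤ _ := by gcongr
  exact_mod_cast this

set_option maxHeartbeats 1000000 in
theorem main_bound (q t : ℕ) (hq : 2 ≤ q) (hlog : 10 * (Real.log t + 3) ^ 2 ≤ t)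
    (htq : (21 * (q : ℝ)) ^ 2 ≤ t) :
    (onlineRamsey q (completeBipartiteGraph (Fin t) (Fin t)) : ℝ) ≤
        48 * (q : ℝ) ^ (t + 2) * (t : ℝ) ^ (3 - 1 / (q : ℝ)) *
          (Real.logb q t) ^ (1 / (q : ℝ)) := by
  have hqR : (2 : ℝ) ≤ q := by exact_mod_cast hq
  have hqt : 441 * (q : ℝ) ≤ t := by nlinarith
  have htR : (882 : ℝ) ≤ t := by linarith
  have ht2 : 2 ≤ t := by
    have : (2 : ℝ) ≤ t := by linarith
    exact_mod_cast this
  have hqt' : q ≤ t := by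
    have : (q : ℝ) ≤ t := by linarith
    exact_mod_cast this
  have ht0 : (0 : ℝ) < t := by linarith
  have hlogt : 0 ≤ Real.log t := Real.log_nonneg (by linarith)
  have hlogq : Real.log 2 ≤ Real.log q := Real.log_le_log (by norm_num) hqR
  have hlog2 := Real.log_two_gt_d9
  set lg := Real.logb q t with hlg
  have hlg1 : 1 ≤ lg := by
    rw [hlg, Real.le_logb_iff_rpow_le (by linarith) ht0, Real.rpow_one]
    linarith
  have hlgle : lg ≤ 2 * Real.log t := by
    rw [hlg, Real.logb, div_le_iff₀ (by linarith)]
    nlinarith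
  obtain ⟨s, hs⟩ : ∃ s, s = 2 * Nat.clog q t := ⟨_, rfl⟩
  have hsR : (s : ℝ) ≤ 4 * lg := by
    have h1 : Nat.clog q t = ⌈Real.logb q t⌉₊ := (Real.natCeil_logb_natCast q t).symm
    have h2 := Nat.ceil_lt_add_one (a := lg) (by linarith)
    rw [hs, h1, ← hlg]
    push_cast
    linarith
  have hs1 : (1 : ℝ) ≤ s := by
    have : 0 < Nat.clog q t := Nat.clog_pos (by omega) ht2
    have : 1 ≤ s := by omega
    exact_mod_cast this
  have hqs : t ^ 2 ≤ q ^ s := by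
    rw [hs, mul_comm, pow_mul]
    exact Nat.pow_le_pow_left (Nat.le_pow_clog (by omega) t) 2
  have hst : s ≤ t := by
    have : (s : ℝ) ≤ t := by clear * - hsR hlgle hlog hlogt; nlinarith
    exact_mod_cast this
  have hstR : (s : ℝ) ≤ t := by exact_mod_cast hst
  -- the parameter `ℓ`
  obtain ⟨l, hl⟩ : ∃ l, l = (Real.log t - Real.log s) / q := ⟨_, rfl⟩
  have hlogs : 0 ≤ Real.log s := Real.log_nonneg hs1
  have hlogst : Real.log s ≤ Real.log t := Real.log_le_log (by linarith) hstR
  have hql : q * l = Real.log t - Real.log s := by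
    rw [hl]; field_simp
  have hl0 : 0 ≤ l := by
    rw [hl]; apply div_nonneg <;> linarith
  have hlle : q * l ≤ Real.log t := by linarith
  have hl1 : l ≤ Real.log t := by nlinarith
  have hseq : (s : ℝ) * Real.exp (q * l) = t := by
    rw [hql, Real.exp_sub, Real.exp_log ht0, Real.exp_log (by linarith)]
    field_simp
  obtain ⟨δ, hδ⟩ : ∃ δ, δ = ⌈t * l⌉₊ := ⟨_, rfl⟩
  have hδ1 : t * l ≤ δ := by rw [hδ]; exact Nat.le_ceil _
  have hδ2 : (δ : ℝ) ≤ t * l + 1 := by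
    rw [hδ]; exact (Nat.ceil_lt_add_one (by positivity)).le
  have hq1 : ((q - 1 : ℕ) : ℝ) = q - 1 := by
    rw [Nat.cast_sub (by omega)]; simp
  obtain ⟨b, hb⟩ : ∃ b, b = (q - 1) * l := ⟨_, rfl⟩
  have hb0 : 0 ≤ b := by rw [hb]; apply mul_nonneg <;> linarith
  have hb1 : b ≤ Real.log t := by rw [hb]; linarith
  have hqδ : ((q : ℝ) - 1) * δ ≤ t * b + t := by
    calc ((q : ℝ) - 1) * δ ≤ (q - 1) * (t * l + 1) := by gcongr; linarith
      _ = t * b + (q - 1) := by rw [hb]; ring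
      _ ≤ _ := by linarith
  have hbt : (3 + b) * (b + 2) ≤ t := by
    have h4 : (3 + b) * (b + 2) ≤ (Real.log t + 3) * (Real.log t + 3) :=
      mul_le_mul (by linarith) (by linarith) (by linarith) (by linarith)
    linarith [sq_nonneg (Real.log t + 3), sq (Real.log t + 3)]
  have hL3 : Real.log t + 3 ≤ t := by clear * - hlog hlogt; nlinarith
  have hL2 : Real.log t ^ 2 ≤ t := by clear * - hlog hlogt; nlinarith
  have hl2 : l ^ 2 ≤ t := (pow_le_pow_left₀ hl0 hl1 2).trans hL2
  have hbt' : b + 3 ≤ t := by linarith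
  have hδk : (q - 1) * δ ≤ t ^ 2 := by
    have : (((q - 1) * δ : ℕ) : ℝ) ≤ ((t ^ 2 : ℕ) : ℝ) := by
      push_cast
      rw [hq1]
      have h4 : (t : ℝ) * (b + 1) ≤ t * t := mul_le_mul_of_nonneg_left (by linarith) ht0.le
      linarith [sq (t : ℝ)]
    exact_mod_cast this
  obtain ⟨n₂, hn₂⟩ : ∃ n₂, n₂ = ⌈Real.exp 3 * (q : ℝ) ^ (t + 1) * (t * Real.exp (-l))⌉₊ := ⟨_, rfl⟩
  have hn₂R : Real.exp 3 * (q : ℝ) ^ (t + 1) * (t * Real.exp (-l)) ≤ n₂ := by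
    rw [hn₂]; exact Nat.le_ceil _
  have hpos : 0 < Real.exp 3 * (q : ℝ) ^ (t + 1) * (t * Real.exp (-l)) := by positivity
  have hn₂R' : (n₂ : ℝ) ≤ Real.exp 3 * (q : ℝ) ^ (t + 1) * (t * Real.exp (-l)) + 1 := by
    rw [hn₂]; exact (Nat.ceil_lt_add_one hpos.le).le
  have hn₂0 : 0 < n₂ := by rw [hn₂]; exact Nat.ceil_pos.2 hpos
  have h2 : t * (q * t ^ 2).choose t * q ≤ n₂ * (t ^ 2 + δ).choose t := by
    have hD : (t : ℝ) * (t + l - 1) ≤ ((t ^ 2 + δ : ℕ) : ℝ) + 1 - t := by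
      push_cast; linarith
    have hD0 : (0 : ℝ) < t * (t + l - 1) := mul_pos ht0 (by linarith)
    apply stage_two_aux q t t (t ^ 2 + δ) n₂ (3 - l) (by omega) (by linarith)
    · have h3 : (0 : ℝ) ≤ t + 3 - l := by linarith
      have h4 := mul_le_mul_of_nonneg_left hD h3
      have h5 : (l - 3) * (l - 1) ≤ 2 * t := by linarith [sq l]
      have h6 := mul_le_mul_of_nonneg_left h5 ht0.le
      linarith
    · refine le_trans (le_of_eq ?_) hn₂R
      rw [sub_eq_add_neg, Real.exp_add]; ring
  have h3 : s * (q * t ^ 2).choose t * q ≤ n₂ * (t ^ 2 - (q - 1) * δ).choose t := by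
    have hD : (t : ℝ) * (t - b - 2) ≤ ((t ^ 2 - (q - 1) * δ : ℕ) : ℝ) + 1 - t := by
      rw [Nat.cast_sub hδk]
      push_cast
      rw [hq1]
      linarith
    have hD0 : (0 : ℝ) < t * (t - b - 2) := mul_pos ht0 (by linarith)
    apply stage_two_aux q t s (t ^ 2 - (q - 1) * δ) n₂ (3 + b) (by omega) (by linarith)
    · have h3 : (0 : ℝ) ≤ t + 3 + b := by linarith
      have h4 := mul_le_mul_of_nonneg_left hD h3
      have h6 := mul_le_mul_of_nonneg_left hbt ht0.le
      linarith
    · refine le_trans (le_of_eq ?_) hn₂R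
      have e1 : 3 + b = 3 + q * l + -l := by rw [hb]; ring
      rw [e1, Real.exp_add, Real.exp_add]
      calc _ = Real.exp 3 * (q : ℝ) ^ (t + 1) * (((s : ℝ) * Real.exp (q * l)) * Real.exp (-l)) := by
            ring
        _ = _ := by rw [hseq]
  have hgame := game_bound (q := q) (by omega) t s (t ^ 2) δ (21 * q * (q * t ^ 2) * q ^ (t - s)) n₂
    hst (by clear * - hq ht2; nlinarith) hδk (by positivity) hn₂0 (stage_one q t (t - s) ht2 (by omega)) h2 h3
  have hgR : (onlineRamsey q (completeBipartiteGraph (Fin t) (Fin t)) : ℝ) ≤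
      q * (t : ℝ) ^ 2 * n₂ + q * (t : ℝ) ^ 2 * (21 * q * (q * (t : ℝ) ^ 2) * (q : ℝ) ^ (t - s)) := by
    exact_mod_cast hgame
  set F := (q : ℝ) ^ (t + 2) * (t : ℝ) ^ (3 - 1 / (q : ℝ)) * lg ^ (1 / (q : ℝ)) with hF
  have hqinv : 1 / (q : ℝ) ≤ 1 / 2 := by
    apply one_div_le_one_div_of_le <;> linarith
  have hqinv0 : 0 ≤ 1 / (q : ℝ) := by positivity
  -- first stage cost
  have hpowqs : (t : ℝ) ^ 2 * (q : ℝ) ^ (t - s) ≤ (q : ℝ) ^ t := by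
    have : t ^ 2 * q ^ (t - s) ≤ q ^ t := by
      calc t ^ 2 * q ^ (t - s) ≤ q ^ s * q ^ (t - s) := by gcongr
        _ = q ^ t := by rw [← pow_add]; congr 1; omega
    exact_mod_cast this
  have hsqrt : 21 * (q : ℝ) ≤ (t : ℝ) ^ (1 / 2 : ℝ) := by
    rw [← Real.sqrt_eq_rpow]
    exact Real.le_sqrt_of_sq_le htq
  have hlgpow : 1 ≤ lg ^ (1 / (q : ℝ)) := Real.one_le_rpow hlg1 hqinv0
  have hFbig : 21 * (q : ℝ) ^ (t + 3) * (t : ℝ) ^ 2 ≤ F := by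
    have h4 : 21 * (q : ℝ) * (t : ℝ) ^ 2 ≤ (t : ℝ) ^ (3 - 1 / (q : ℝ)) := by
      calc 21 * (q : ℝ) * (t : ℝ) ^ 2 ≤ (t : ℝ) ^ (1 / 2 : ℝ) * (t : ℝ) ^ (2 : ℝ) := by
            rw [Real.rpow_two]; gcongr
        _ = (t : ℝ) ^ (1 / 2 + 2 : ℝ) := (Real.rpow_add ht0 _ _).symm
        _ ≤ _ := Real.rpow_le_rpow_of_exponent_le (by linarith) (by linarith)
    calc 21 * (q : ℝ) ^ (t + 3) * (t : ℝ) ^ 2 = (q : ℝ) ^ (t + 2) * (21 * (q : ℝ) * (t : ℝ) ^ 2) := by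
          ring
      _ ≤ (q : ℝ) ^ (t + 2) * (t : ℝ) ^ (3 - 1 / (q : ℝ)) := by gcongr
      _ ≤ F := by
        rw [hF]
        exact le_mul_of_one_le_right (by positivity) hlgpow
  have hc1 : q * (t : ℝ) ^ 2 * (21 * q * (q * (t : ℝ) ^ 2) * (q : ℝ) ^ (t - s)) ≤ F := by
    calc _ = 21 * (q : ℝ) ^ 3 * (t : ℝ) ^ 2 * ((t : ℝ) ^ 2 * (q : ℝ) ^ (t - s)) := by ring
      _ ≤ 21 * (q : ℝ) ^ 3 * (t : ℝ) ^ 2 * (q : ℝ) ^ t := by gcongr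
      _ = 21 * (q : ℝ) ^ (t + 3) * (t : ℝ) ^ 2 := by ring
      _ ≤ F := hFbig
  have hc3 : (q : ℝ) * (t : ℝ) ^ 2 ≤ F := by
    refine le_trans ?_ hFbig
    have h5 : (q : ℝ) ≤ (q : ℝ) ^ (t + 3) := le_self_pow₀ (by linarith) (by omega)
    have h6 : (q : ℝ) ≤ 21 * (q : ℝ) ^ (t + 3) := by linarith
    gcongr
  have hexp : Real.exp (-l) ≤ (t : ℝ) ^ (-(1 / (q : ℝ))) * (2 * lg ^ (1 / (q : ℝ))) := by
    have e1 : Real.exp (-l) = (t : ℝ) ^ (-(1 / (q : ℝ))) * (s : ℝ) ^ (1 / (q : ℝ)) := by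
      rw [Real.rpow_def_of_pos ht0, Real.rpow_def_of_pos (by linarith), ← Real.exp_add, hl]
      congr 1
      ring
    rw [e1]
    gcongr
    calc (s : ℝ) ^ (1 / (q : ℝ)) ≤ (4 * lg) ^ (1 / (q : ℝ)) := by gcongr
      _ = 4 ^ (1 / (q : ℝ)) * lg ^ (1 / (q : ℝ)) := Real.mul_rpow (by norm_num) (by linarith)
      _ ≤ 2 * lg ^ (1 / (q : ℝ)) := by
        gcongr
        calc (4 : ℝ) ^ (1 / (q : ℝ)) ≤ 4 ^ (1 / 2 : ℝ) :=
              Real.rpow_le_rpow_of_exponent_le (by norm_num) hqinv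
          _ = 2 := by
            rw [← Real.sqrt_eq_rpow, show (4 : ℝ) = 2 ^ 2 by norm_num]
            exact Real.sqrt_sq (by norm_num)
  have hc2 : q * (t : ℝ) ^ 2 * (Real.exp 3 * (q : ℝ) ^ (t + 1) * (t * Real.exp (-l))) ≤ 40.4 * F := by
    have e3 := exp_three_le
    have e4 : (t : ℝ) ^ (3 - 1 / (q : ℝ)) = (t : ℝ) ^ 3 * (t : ℝ) ^ (-(1 / (q : ℝ))) := by
      rw [sub_eq_add_neg, Real.rpow_add ht0]
      norm_cast
    calc _ = Real.exp 3 * ((q : ℝ) ^ (t + 2) * (t : ℝ) ^ 3 * Real.exp (-l)) := by ring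
      _ ≤ 20.2 * ((q : ℝ) ^ (t + 2) * (t : ℝ) ^ 3 *
          ((t : ℝ) ^ (-(1 / (q : ℝ))) * (2 * lg ^ (1 / (q : ℝ))))) := by gcongr
      _ = 40.4 * F := by rw [hF, e4]; ring
  have hF0 : 0 ≤ F := le_trans (by positivity) hc3
  have hc4 : q * (t : ℝ) ^ 2 * n₂ ≤ 40.4 * F + F := by
    calc q * (t : ℝ) ^ 2 * n₂ ≤
        q * (t : ℝ) ^ 2 * (Real.exp 3 * (q : ℝ) ^ (t + 1) * (t * Real.exp (-l)) + 1) := by gcongr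
      _ = q * (t : ℝ) ^ 2 * (Real.exp 3 * (q : ℝ) ^ (t + 1) * (t * Real.exp (-l))) +
          q * (t : ℝ) ^ 2 := by ring
      _ ≤ _ := by linarith
  calc _ ≤ _ := hgR
    _ ≤ 48 * F := by linarith
    _ = _ := by rw [hF]; ring

theorem eventually_log_bound : ∀ᶠ t : ℕ in Filter.atTop, 10 * (Real.log t + 3) ^ 2 ≤ (t : ℝ) := by
  have h1 : (fun x : ℝ => Real.log x ^ 2) =o[Filter.atTop] (fun x : ℝ => x) :=
    Real.isLittleO_pow_log_id_atTop
  have h2 := h1.bound (show (0 : ℝ) < 1 / 160 by norm_num)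
  have h3 : ∀ᶠ x : ℝ in Filter.atTop, 3 ≤ Real.log x :=
    Real.tendsto_log_atTop.eventually_ge_atTop 3
  have h4 : ∀ᶠ x : ℝ in Filter.atTop, 10 * (Real.log x + 3) ^ 2 ≤ x := by
    filter_upwards [h2, h3, Filter.eventually_ge_atTop 0] with x hx hx3 hx0
    rw [Real.norm_of_nonneg (by positivity), Real.norm_of_nonneg hx0] at hx
    nlinarith
  exact tendsto_natCast_atTop_atTop.eventually h4

/-- For `q ≥ 2` and sufficiently large `t`,
`r̃_q(K_{t,t}) ≤ 48 q^{t+2} t^{3-1/q} (log_q t)^{1/q}`. -/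
theorem online_ramsey_bipartite_q (q : ℕ) (hq : 2 ≤ q) :
    ∃ t₀ : ℕ, ∀ t : ℕ, t₀ ≤ t →
      (onlineRamsey q (completeBipartiteGraph (Fin t) (Fin t)) : ℝ) ≤
        48 * (q : ℝ) ^ (t + 2) * (t : ℝ) ^ (3 - 1 / (q : ℝ)) *
          (Real.logb q t) ^ (1 / (q : ℝ)) := by
  have h1 : ∀ᶠ t : ℕ in Filter.atTop, (21 * (q : ℝ)) ^ 2 ≤ (t : ℝ) :=
    tendsto_natCast_atTop_atTop.eventually_ge_atTop _
  obtain ⟨t₀, ht₀⟩ := Filter.eventually_atTop.1 (eventually_log_bound.and h1)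
  exact ⟨t₀, fun t ht => main_bound q t hq (ht₀ t ht).1 (ht₀ t ht).2⟩
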